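/- Let 1 ≤ q ≤ ∞ and 4/3 < p < ∞. Then every Schwartz function φ on ℝ³ satisfies ‖φ‖_{l^q l^p L²} < ∞; that is, the Schwartz functions are contained in l^q l^p L². -/

import Mathlib

noncomputable section

open MeasureTheory
open scoped ENNReal

abbrev R3 := ℝ × ℝ × ℝ

/-- (Nonunitary) Fourier transform on ℝ³ = ℝ_x × ℝ²_y. -/
def ft3 (f : R3 → ℂ) (ζ : R3) : ℂ :=
  ∫ z : R3, Complex.exp (-Complex.I *
    ((z.1 * ζ.1 + z.2.1 * ζ.2.1 + z.2.2 * ζ.2.2 : ℝ) : ℂ)) * f z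

/-- The region Γ_{λ,k} = {(ξ,η) : λ ≤ |ξ| < 2λ, |η/ξ − k|_∞ ≤ λ/2}. -/
def Gam (l : ℝ) (k : ℝ × ℝ) : Set R3 :=
  {ζ : R3 | l ≤ |ζ.1| ∧ |ζ.1| < 2 * l ∧
    max |ζ.2.1 / ζ.1 - k.1| |ζ.2.2 / ζ.1 - k.2| ≤ l / 2}

/-- Fourier projection f_{Γ_{λ,k}}: inverse Fourier transform of the
characteristic function of Γ_{λ,k} times f̂. -/
def projG (l : ℝ) (k : ℝ × ℝ) (φ : SchwartzMap R3 ℂ) (z : R3) : ℂ :=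
  ∫ ζ in Gam l k, Complex.exp (Complex.I *
    ((z.1 * ζ.1 + z.2.1 * ζ.2.1 + z.2.2 * ζ.2.2 : ℝ) : ℂ)) * ft3 (fun w => φ w) ζ

/-- ℓ^p sum in ℝ≥0∞, with the usual modification for p = ∞. -/
def lpS (p : ℝ≥0∞) {ι : Type*} (f : ι → ℝ≥0∞) : ℝ≥0∞ :=
  if p = ∞ then ⨆ i, f i else (∑' i, f i ^ p.toReal) ^ (1 / p.toReal)

/-- The norm ‖φ‖_{l^q l^p L²} = (∑_{λ∈2^ℤ} λ^{q/2} (∑_{k∈λℤ²} ‖φ_{Γ_{λ,k}}‖_{L²}^p)^{q/p})^{1/q}. -/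
def lqlpNorm (q p : ℝ≥0∞) (φ : SchwartzMap R3 ℂ) : ℝ≥0∞ :=
  lpS q fun n : ℤ => ((2 : ℝ≥0∞) ^ n) ^ ((1 : ℝ) / 2) *
    lpS p fun m : ℤ × ℤ =>
      eLpNorm (projG ((2 : ℝ) ^ n) ((2 : ℝ) ^ n * (m.1 : ℝ), (2 : ℝ) ^ n * (m.2 : ℝ)) φ) 2 volume

instance haar2 : (volume : Measure (ℝ × ℝ)).IsAddHaarMeasure :=
  inferInstanceAs ((volume : Measure ℝ).prod (volume : Measure ℝ)).IsAddHaarMeasure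

instance haar3 : (volume : Measure R3).IsAddHaarMeasure :=
  inferInstanceAs ((volume : Measure ℝ).prod (volume : Measure (ℝ × ℝ))).IsAddHaarMeasure

def Lf : R3 →L[ℝ] R3 →L[ℝ] ℝ :=
  LinearMap.toContinuousLinearMap
    { toFun := fun z => LinearMap.toContinuousLinearMap
        { toFun := fun ζ => (2 * Real.pi)⁻¹ * (z.1 * ζ.1 + z.2.1 * ζ.2.1 + z.2.2 * ζ.2.2)
          map_add' := by intro x y; simp; ring
          map_smul' := by intro x y; simp; ring }
      map_add' := by intro x y; ext <;> simp <;> ring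
      map_smul' := by intro x y; ext <;> simp <;> ring }

lemma Lf_apply (z ζ : R3) :
    Lf z ζ = (2 * Real.pi)⁻¹ * (z.1 * ζ.1 + z.2.1 * ζ.2.1 + z.2.2 * ζ.2.2) := rfl

lemma ft3_eq (φ : R3 → ℂ) :
    ft3 φ = VectorFourier.fourierIntegral Real.fourierChar volume Lf.toLinearMap₁₂ φ := by
  ext ζ
  unfold ft3 VectorFourier.fourierIntegral
  congr 1
  ext z
  rw [Circle.smul_def, Real.fourierChar_apply, smul_eq_mul]
  congr 2
  have : (Real.pi : ℂ) ≠ 0 := by exact_mod_cast Real.pi_ne_zero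
  have h2 : Lf.toLinearMap₁₂ z ζ = _ := Lf_apply z ζ
  rw [h2]
  push_cast
  field_simp

lemma ft3_cont (φ : SchwartzMap R3 ℂ) : Continuous (ft3 (fun w => φ w)) := by
  rw [ft3_eq]
  exact VectorFourier.fourierIntegral_continuous Real.continuous_fourierChar
    Lf.continuous₂ φ.integrable

lemma ft3_dir (φ : SchwartzMap R3 ℂ) (n : ℕ) (v : R3) :
    ∃ C : ℝ, ∀ ζ, |Lf v ζ| ^ n * ‖ft3 (fun w => φ w) ζ‖ ≤ C := by
  have := fun ζ => VectorFourier.pow_mul_norm_iteratedFDeriv_fourierIntegral_le (μ := volume) Lf (f := φ)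
    (K := ⊤) (N := ⊤) (φ.smooth _)
    (fun k n _ _ => φ.integrable_pow_mul_iteratedFDeriv volume k n) (k := 0) (n := n)
    le_top le_top v ζ
  simp only [norm_iteratedFDeriv_zero] at this
  rw [ft3_eq]
  exact ⟨_, this⟩

lemma ft3_coord (φ : SchwartzMap R3 ℂ) (n : ℕ) (v : R3) :
    ∃ C : ℝ, ∀ ζ : R3, |v.1 * ζ.1 + v.2.1 * ζ.2.1 + v.2.2 * ζ.2.2| ^ n *
      ‖ft3 (fun w => φ w) ζ‖ ≤ C := by
  obtain ⟨C, hC⟩ := ft3_dir φ n ((2 * Real.pi) • v)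
  refine ⟨C, fun ζ => ?_⟩
  have h := hC ζ
  rw [Lf_apply] at h
  convert h using 4
  have : Real.pi ≠ 0 := Real.pi_ne_zero
  simp
  field_simp

/-- decay of the Fourier transform -/
lemma ft3_decay (φ : SchwartzMap R3 ℂ) (n : ℕ) :
    ∃ C : ℝ, 0 ≤ C ∧ ∀ ζ : R3, ‖ft3 (fun w => φ w) ζ‖ ≤
      C * (((1 + |ζ.1|) ^ n)⁻¹ * ((1 + |ζ.2.1|) ^ n)⁻¹ * ((1 + |ζ.2.2|) ^ n)⁻¹) := by
  obtain ⟨C0, h0⟩ := ft3_coord φ 0 0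
  obtain ⟨C1, h1⟩ := ft3_coord φ (3 * n) (1, 0, 0)
  obtain ⟨C2, h2⟩ := ft3_coord φ (3 * n) (0, 1, 0)
  obtain ⟨C3, h3⟩ := ft3_coord φ (3 * n) (0, 0, 1)
  simp at h0 h1 h2 h3
  refine ⟨2 ^ (3 * n) * (|C0| + |C1| + |C2| + |C3|), by positivity, fun ζ => ?_⟩
  rw [← mul_inv, ← mul_inv, ← div_eq_mul_inv, le_div_iff₀ (by positivity)]
  set g := ‖ft3 (fun w => φ w) ζ‖ with hg
  set M := max 1 (max |ζ.1| (max |ζ.2.1| |ζ.2.2|)) with hM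
  have e1 : |ζ.1| ≤ M := by simp [hM]
  have e2 : |ζ.2.1| ≤ M := by simp [hM]
  have e3 : |ζ.2.2| ≤ M := by simp [hM]
  have e0 : 1 ≤ M := by simp [hM]
  have hM0 : 0 ≤ M := by linarith
  have hg0 : 0 ≤ g := norm_nonneg _
  have key : M ^ (3 * n) * g ≤ |C0| + |C1| + |C2| + |C3| := by
    have a0 := abs_nonneg C0
    have a1 := abs_nonneg C1
    have a2 := abs_nonneg C2
    have a3 := abs_nonneg C3
    have k0 := (h0 ζ.1 ζ.2.1 ζ.2.2).trans (le_abs_self _)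
    have k1 := (h1 ζ.1 ζ.2.1 ζ.2.2).trans (le_abs_self _)
    have k2 := (h2 ζ.1 ζ.2.1 ζ.2.2).trans (le_abs_self _)
    have k3 := (h3 ζ.1 ζ.2.1 ζ.2.2).trans (le_abs_self _)
    have : M = 1 ∨ M = |ζ.1| ∨ M = |ζ.2.1| ∨ M = |ζ.2.2| := by
      rw [hM]; grind
    rcases this with h | h | h | h <;> rw [h]
    · simp; linarith
    · linarith
    · linarith
    · linarith
  calc g * ((1 + |ζ.1|) ^ n * (1 + |ζ.2.1|) ^ n * (1 + |ζ.2.2|) ^ n)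
      ≤ g * ((2 * M) ^ n * (2 * M) ^ n * (2 * M) ^ n) := by
        gcongr <;> linarith
    _ = 2 ^ (3 * n) * (M ^ (3 * n) * g) := by ring
    _ ≤ _ := by gcongr

section
open FourierTransform
open scoped SchwartzMap ContDiff

lemma planch {E : Type*} [NormedAddCommGroup E] [InnerProductSpace ℝ E] [FiniteDimensional ℝ E]
    [MeasurableSpace E] [BorelSpace E] (h : E → ℂ) (h1 : Integrable h volume) (h2 : MemLp h 2 volume) :
    eLpNorm (𝓕 h) 2 volume = eLpNorm h 2 volume := by
  set H := h2.toLp h with hH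
  have hc : Continuous (𝓕 h) :=
    VectorFourier.fourierIntegral_continuous Real.continuous_fourierChar continuous_inner h1
  have key : ∀ᵐ x ∂(volume : Measure E), (𝓕 H : Lp (α := E) ℂ 2 volume) x = 𝓕 h x := by
    apply ae_eq_of_integral_contDiff_smul_eq
    · exact (Lp.memLp (μ := (volume : Measure E)) (𝓕 H : Lp (α := E) ℂ 2 volume)).locallyIntegrable (by norm_num)
    · exact hc.locallyIntegrable
    intro g hg1 hg2
    have hg2' : HasCompactSupport (fun x => (g x : ℂ)) := hg2.comp_left (g := fun x : ℝ => (x : ℂ)) (by simp)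
    have hg1' : ContDiff ℝ ∞ (fun x => (g x : ℂ)) := Complex.ofRealCLM.contDiff.comp hg1
    set ψ : 𝓢(E, ℂ) := hg2'.toSchwartzMap hg1' with hψ
    have hψa : ∀ x, ψ x = (g x : ℂ) := fun x => rfl
    have t := congrArg (fun T => T ψ) (Lp.fourier_toTemperedDistribution_eq H)
    simp only [TemperedDistribution.fourier_apply, Lp.toTemperedDistribution_apply] at t
    have t2 : ∫ x, (𝓕 ψ) x • H x = ∫ x, (𝓕 ψ) x • h x := by
      apply integral_congr_ae
      filter_upwards [h2.coeFn_toLp] with x hx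
      rw [hH, hx]
    have t3 : ∫ ξ, (𝓕 ψ) ξ • h ξ = ∫ x, ψ x • 𝓕 h x := by
      simpa using! VectorFourier.integral_fourierIntegral_smul_eq_flip (L := innerₗ E)
        Real.continuous_fourierChar continuous_inner ψ.integrable h1
    calc _ = ∫ x, ψ x • (𝓕 H : Lp (α := E) ℂ 2 volume) x := by simp [hψa]
      _ = ∫ x, ψ x • 𝓕 h x := by rw [← t, t2, t3]
      _ = _ := by simp [hψa]
  rw [← eLpNorm_congr_ae key]
  have := Lp.norm_fourier_eq H
  rw [Lp.norm_def, Lp.norm_def, ENNReal.toReal_eq_toReal_iff' (Lp.eLpNorm_ne_top _) (Lp.eLpNorm_ne_top _)] at this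
  rw [this]
  exact eLpNorm_congr_ae h2.coeFn_toLp

abbrev E3 := WithLp 2 (ℝ × WithLp 2 (ℝ × ℝ))

def eE : R3 ≃ᵐ E3 :=
  (MeasurableEquiv.prodCongr (MeasurableEquiv.refl ℝ) (MeasurableEquiv.toLp 2 (ℝ × ℝ))).trans
    (MeasurableEquiv.toLp 2 (ℝ × WithLp 2 (ℝ × ℝ)))

lemma eE_mp : MeasurePreserving eE := by
  refine MeasurePreserving.trans ?_ (WithLp.volume_preserving_toLp ℝ (WithLp 2 (ℝ × ℝ)))
  exact (MeasurePreserving.id volume).prod (WithLp.volume_preserving_toLp ℝ ℝ)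

lemma eE_inner (z w : R3) : inner ℝ (eE z) (eE w) = z.1 * w.1 + z.2.1 * w.2.1 + z.2.2 * w.2.2 := by
  simp [eE, MeasurableEquiv.prodCongr]
  ring

lemma planch3 : ∃ K : ℝ≥0∞, K ≠ ⊤ ∧ ∀ h : R3 → ℂ, Integrable h → MemLp h 2 →
    eLpNorm (fun z : R3 => ∫ ζ : R3, Complex.exp (Complex.I *
      ((z.1 * ζ.1 + z.2.1 * ζ.2.1 + z.2.2 * ζ.2.2 : ℝ) : ℂ)) * h ζ) 2 volume
      ≤ K * eLpNorm h 2 volume := by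
  set c : ℝ := -(2 * Real.pi)⁻¹ with hc
  have hc0 : c ≠ 0 := by simp [hc, Real.pi_ne_zero]
  set κ : ℝ≥0∞ := ENNReal.ofReal |(c ^ Module.finrank ℝ E3)⁻¹| with hκ
  refine ⟨κ ^ (1 / (2 : ℝ≥0∞)).toReal, ?_, fun h h1 h2 => ?_⟩
  · exact ENNReal.rpow_ne_top_of_nonneg (by simp) ENNReal.ofReal_ne_top
  set G : E3 → ℂ := h ∘ eE.symm with hG
  have hmp : MeasurePreserving eE.symm := eE_mp.symm
  have g1 : Integrable G := hmp.integrable_comp_of_integrable h1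
  have g2 : MemLp G 2 := h2.comp_measurePreserving hmp
  have hcont : Continuous (𝓕 G) :=
    VectorFourier.fourierIntegral_continuous Real.continuous_fourierChar continuous_inner g1
  have heq : (fun z : R3 => ∫ ζ : R3, Complex.exp (Complex.I *
      ((z.1 * ζ.1 + z.2.1 * ζ.2.1 + z.2.2 * ζ.2.2 : ℝ) : ℂ)) * h ζ)
      = (fun x => 𝓕 G (c • x)) ∘ eE := by
    ext z
    simp only [Function.comp]
    rw [Real.fourier_eq, ← eE_mp.integral_comp eE.measurableEmbedding]
    congr 1
    ext ζ
    rw [Circle.smul_def, Real.fourierChar_apply, smul_eq_mul, inner_smul_right, eE_inner]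
    have : (Real.pi : ℂ) ≠ 0 := by exact_mod_cast Real.pi_ne_zero
    simp only [hG, Function.comp, MeasurableEquiv.symm_apply_apply]
    congr 2
    rw [hc]
    push_cast
    field_simp
  have hm : AEStronglyMeasurable (fun x : E3 => 𝓕 G (c • x)) volume :=
    (hcont.comp (continuous_const_smul c)).aestronglyMeasurable
  rw [heq, eLpNorm_comp_measurePreserving hm eE_mp]
  have e2 : eLpNorm (fun x => 𝓕 G (c • x)) 2 volume = eLpNorm (𝓕 G) 2 (Measure.map (fun x : E3 => c • x) volume) := by
    rw [eLpNorm_map_measure hcont.aestronglyMeasurable (by fun_prop)]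
    rfl
  rw [e2, Measure.map_addHaar_smul _ hc0, eLpNorm_smul_measure_of_ne_top (by simp), planch G g1 g2,
    hG, eLpNorm_comp_measurePreserving h2.1 hmp, smul_eq_mul]
end

lemma Gam_meas (l : ℝ) (k : ℝ × ℝ) : MeasurableSet (Gam l k) := by
  have h1 : MeasurableSet {ζ : R3 | l ≤ |ζ.1|} := measurableSet_le (by fun_prop) (by fun_prop)
  have h2 : MeasurableSet {ζ : R3 | |ζ.1| < 2 * l} := measurableSet_lt (by fun_prop) (by fun_prop)
  have h3 : MeasurableSet {ζ : R3 | max |ζ.2.1 / ζ.1 - k.1| |ζ.2.2 / ζ.1 - k.2| ≤ l / 2} :=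
    measurableSet_le (by fun_prop) (by fun_prop)
  exact h1.inter (h2.inter h3)

lemma Gam_aux {l x η k : ℝ} (hl : 0 < l) (h1 : l ≤ |x|) (h2 : |x| < 2 * l)
    (h : |η / x - k| ≤ l / 2) : η ∈ Set.Icc (x * k - l ^ 2) (x * k + l ^ 2) := by
  have hx : x ≠ 0 := by rintro rfl; simp at h1; linarith
  have e : |η - x * k| ≤ l ^ 2 := by
    have : η - x * k = x * (η / x - k) := by field_simp
    rw [this, abs_mul]
    calc |x| * |η / x - k| ≤ (2 * l) * (l / 2) := by gcongr
      _ = l ^ 2 := by ring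
  rw [abs_le] at e
  constructor <;> linarith

lemma Gam_vol {l : ℝ} (hl : 0 < l) (k : ℝ × ℝ) :
    volume (Gam l k) ≤ ENNReal.ofReal (16 * l ^ 5) := by
  have e0 : (volume : Measure R3) = (volume : Measure ℝ).prod (volume : Measure (ℝ × ℝ)) := rfl
  rw [e0, Measure.prod_apply (Gam_meas l k)]
  calc ∫⁻ x : ℝ, volume (Prod.mk x ⁻¹' Gam l k)
      ≤ ∫⁻ x : ℝ, (Set.Icc (-(2 * l)) (2 * l)).indicator
          (fun _ => ENNReal.ofReal (4 * l ^ 4)) x := by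
        apply lintegral_mono
        intro x
        by_cases hx : l ≤ |x| ∧ |x| < 2 * l
        · have hm : x ∈ Set.Icc (-(2 * l)) (2 * l) := abs_le.1 hx.2.le
          simp only [Set.indicator_of_mem hm]
          calc volume (Prod.mk x ⁻¹' Gam l k)
              ≤ volume (Set.Icc (x * k.1 - l ^ 2) (x * k.1 + l ^ 2) ×ˢ
                  Set.Icc (x * k.2 - l ^ 2) (x * k.2 + l ^ 2)) := by
                apply measure_mono
                rintro ⟨a, b⟩ ⟨h1, h2, h3⟩
                rw [max_le_iff] at h3
                exact ⟨Gam_aux hl h1 h2 h3.1, Gam_aux hl h1 h2 h3.2⟩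
            _ = ENNReal.ofReal (4 * l ^ 4) := by
                have e1 : (volume : Measure (ℝ × ℝ)) = (volume : Measure ℝ).prod volume := rfl
                rw [e1, Measure.prod_prod, Real.volume_Icc, Real.volume_Icc,
                  ← ENNReal.ofReal_mul (by nlinarith)]
                congr 1; ring
        · have : Prod.mk x ⁻¹' Gam l k = ∅ := by
            ext y
            simp only [Set.mem_preimage, Set.mem_empty_iff_false, iff_false]
            rintro ⟨h1, h2, -⟩
            exact hx ⟨h1, h2⟩
          simp [this]
    _ = ENNReal.ofReal (4 * l ^ 4) * ENNReal.ofReal (2 * l - -(2 * l)) := by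
        rw [lintegral_indicator_const measurableSet_Icc, Real.volume_Icc]
    _ ≤ _ := by
        rw [← ENNReal.ofReal_mul (by positivity)]
        apply ENNReal.ofReal_le_ofReal
        apply le_of_eq; ring

lemma eta_lower {l x η : ℝ} {m : ℤ} (hl : 0 < l) (h1 : l ≤ |x|)
    (h : |η / x - l * m| ≤ l / 2) : l ^ 2 * |(m : ℝ)| / 2 ≤ |η| := by
  have hx : x ≠ 0 := by rintro rfl; simp at h1; linarith
  rcases eq_or_ne m 0 with rfl | hm
  · simp
  have hm1 : (1 : ℝ) ≤ |(m : ℝ)| := by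
    have := Int.one_le_abs hm
    exact_mod_cast this
  have h3 : l * |(m : ℝ)| ≤ |η / x| + l / 2 := by
    have := abs_sub_abs_le_abs_sub (l * (m : ℝ)) (η / x)
    rw [abs_sub_comm, abs_mul, abs_of_pos hl] at this
    linarith
  have h4 : l * |(m : ℝ)| / 2 ≤ |η / x| := by nlinarith
  rw [abs_div, le_div_iff₀ (by positivity)] at h4
  calc l ^ 2 * |(m : ℝ)| / 2 = l * |(m : ℝ)| / 2 * l := by ring
    _ ≤ l * |(m : ℝ)| / 2 * |x| := by gcongr
    _ ≤ _ := h4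

lemma proj_bound (φ : SchwartzMap R3 ℂ) : ∃ D : ℝ, 0 ≤ D ∧ ∀ (l : ℝ) (m : ℤ × ℤ), 0 < l →
    eLpNorm (projG l (l * (m.1 : ℝ), l * (m.2 : ℝ)) φ) 2 volume ≤
      ENNReal.ofReal (D * (l ^ (5 / 2 : ℝ) * ((1 + l) ^ 9)⁻¹) *
        (((1 + l ^ 2 / 2 * |(m.1 : ℝ)|) ^ 9)⁻¹ * ((1 + l ^ 2 / 2 * |(m.2 : ℝ)|) ^ 9)⁻¹)) := by
  obtain ⟨K, hK, hP⟩ := planch3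
  obtain ⟨C, hC, hD⟩ := ft3_decay φ 9
  refine ⟨K.toReal * C * 4, by positivity, fun l m hl => ?_⟩
  set k : ℝ × ℝ := (l * (m.1 : ℝ), l * (m.2 : ℝ)) with hk
  set g := ft3 (fun w => φ w) with hg
  set B : ℝ := C * (((1 + l) ^ 9)⁻¹ * ((1 + l ^ 2 / 2 * |(m.1 : ℝ)|) ^ 9)⁻¹ *
    ((1 + l ^ 2 / 2 * |(m.2 : ℝ)|) ^ 9)⁻¹) with hB
  have hB0 : 0 ≤ B := by positivity
  have hgB : ∀ ζ ∈ Gam l k, ‖g ζ‖ ≤ B := by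
    rintro ζ ⟨h1, h2, h3⟩
    rw [max_le_iff] at h3
    have a1 := eta_lower hl h1 h3.1
    have a2 := eta_lower hl h1 h3.2
    refine (hD ζ).trans ?_
    rw [hB]
    gcongr
    · linarith
    · linarith
  have hvol := Gam_vol hl k
  have hfin : volume (Gam l k) ≠ ⊤ := ne_top_of_le_ne_top ENNReal.ofReal_ne_top hvol
  have hfin' : IsFiniteMeasure (volume.restrict (Gam l k)) := ⟨by simpa using hfin.lt_top⟩
  have hae : ∀ᵐ ζ ∂(volume.restrict (Gam l k)), ‖g ζ‖ ≤ B :=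
    (ae_restrict_iff' (Gam_meas l k)).2 (Filter.Eventually.of_forall hgB)
  have hgm : AEStronglyMeasurable g (volume.restrict (Gam l k)) :=
    (ft3_cont φ).aestronglyMeasurable
  have hi : Integrable ((Gam l k).indicator g) volume := by
    rw [integrable_indicator_iff (Gam_meas l k)]
    exact Integrable.of_bound hgm B hae
  have h2 : MemLp ((Gam l k).indicator g) 2 volume := by
    rw [memLp_indicator_iff_restrict (Gam_meas l k)]
    exact MemLp.of_bound hgm B hae
  have hproj : projG l k φ = fun z : R3 => ∫ ζ : R3, Complex.exp (Complex.I *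
      ((z.1 * ζ.1 + z.2.1 * ζ.2.1 + z.2.2 * ζ.2.2 : ℝ) : ℂ)) * (Gam l k).indicator g ζ := by
    ext z
    rw [projG, ← integral_indicator (Gam_meas l k)]
    congr 1
    ext ζ
    by_cases hζ : ζ ∈ Gam l k <;> simp [hζ, hg]
  rw [hproj]
  refine (hP _ hi h2).trans ?_
  rw [eLpNorm_indicator_eq_eLpNorm_restrict (Gam_meas l k)]
  have hb := eLpNorm_le_of_ae_bound (p := 2) hae
  rw [Measure.restrict_apply_univ] at hb
  calc K * eLpNorm g 2 (volume.restrict (Gam l k))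
      ≤ ENNReal.ofReal K.toReal * (ENNReal.ofReal (16 * l ^ 5) ^ ((2 : ℝ≥0∞).toReal)⁻¹ *
          ENNReal.ofReal B) := by
        rw [ENNReal.ofReal_toReal hK]
        gcongr
        refine hb.trans ?_
        gcongr
    _ = _ := by
        rw [ENNReal.ofReal_rpow_of_nonneg (by positivity) (by simp),
          ← ENNReal.ofReal_mul (by positivity), ← ENNReal.ofReal_mul (by positivity)]
        congr 1
        have : (16 * l ^ 5 : ℝ) ^ ((2 : ℝ≥0∞).toReal)⁻¹ = 4 * l ^ (5 / 2 : ℝ) := by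
          rw [Real.mul_rpow (by norm_num) (by positivity), ← Real.rpow_natCast l 5,
            ← Real.rpow_mul hl.le]
          congr 1
          · rw [show (16 : ℝ) = 4 ^ (2 : ℝ) by norm_num, ← Real.rpow_mul (by norm_num)]
            norm_num
        rw [this, hB]
        ring

lemma sum_nat_bound {s : ℝ} (hs : 0 < s) :
    ∑' j : ℕ, ENNReal.ofReal (((1 + s * ((j : ℝ) + 1)) ^ 2)⁻¹) ≤ ENNReal.ofReal (1 / s) := by
  apply ENNReal.tsum_le_of_sum_range_le
  intro n
  rw [← ENNReal.ofReal_sum_of_nonneg (fun i _ => by positivity)]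
  apply ENNReal.ofReal_le_ofReal
  have : ∀ n : ℕ, ∑ j ∈ Finset.range n, ((1 + s * ((j : ℝ) + 1)) ^ 2)⁻¹ ≤
      1 / s * (1 - (1 + s * n)⁻¹) := by
    intro n
    induction n with
    | zero => simp
    | succ n ih =>
      rw [Finset.sum_range_succ]
      have hx : 0 < 1 + s * (n : ℝ) := by positivity
      have hy : 0 < 1 + s * ((n : ℝ) + 1) := by positivity
      have key : ((1 + s * ((n : ℝ) + 1)) ^ 2)⁻¹ ≤
          1 / s * ((1 + s * (n : ℝ))⁻¹ - (1 + s * ((n : ℝ) + 1))⁻¹) := by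
        have : 1 / s * ((1 + s * (n : ℝ))⁻¹ - (1 + s * ((n : ℝ) + 1))⁻¹) =
            ((1 + s * (n : ℝ)) * (1 + s * ((n : ℝ) + 1)))⁻¹ := by
          field_simp
          ring
        rw [this, sq]
        gcongr
        linarith
      push_cast
      linarith
  refine (this n).trans ?_
  have h1 : 0 ≤ (1 + s * (n : ℝ))⁻¹ := by positivity
  have h2 : 0 < 1 / s := by positivity
  nlinarith

lemma sum_int_bound {s P : ℝ} (hs : 0 < s) (hP : 1 ≤ P) :
    ∑' j : ℤ, ENNReal.ofReal (((1 + s * |(j : ℝ)|) ^ 9)⁻¹) ^ P ≤ ENNReal.ofReal (1 + 2 / s) := by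
  have h1 : ∀ j : ℤ, ENNReal.ofReal (((1 + s * |(j : ℝ)|) ^ 9)⁻¹) ^ P ≤
      ENNReal.ofReal (((1 + s * |(j : ℝ)|) ^ 2)⁻¹) := by
    intro j
    have hx : 1 ≤ 1 + s * |(j : ℝ)| := by
      have : 0 ≤ s * |(j : ℝ)| := by positivity
      linarith
    have hle : ENNReal.ofReal (((1 + s * |(j : ℝ)|) ^ 9)⁻¹) ≤ 1 := by
      rw [ENNReal.ofReal_le_one]
      exact inv_le_one_of_one_le₀ (one_le_pow₀ hx)
    calc _ ≤ ENNReal.ofReal (((1 + s * |(j : ℝ)|) ^ 9)⁻¹) ^ (1 : ℝ) :=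
          ENNReal.rpow_le_rpow_of_exponent_ge hle hP
      _ ≤ _ := by
          rw [ENNReal.rpow_one]
          apply ENNReal.ofReal_le_ofReal
          gcongr
          norm_num
  refine (ENNReal.tsum_le_tsum h1).trans ?_
  rw [tsum_of_nat_of_neg_add_one ENNReal.summable ENNReal.summable,
    tsum_eq_zero_add' ENNReal.summable]
  have e1 : ∀ b : ℕ, |(((b + 1 : ℕ) : ℤ) : ℝ)| = (b : ℝ) + 1 := by
    intro b; push_cast; rw [abs_of_nonneg (by positivity)]
  have e2 : ∀ b : ℕ, |((-((b : ℤ) + 1) : ℤ) : ℝ)| = (b : ℝ) + 1 := by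
    intro b; push_cast; rw [abs_neg, abs_of_nonneg (by positivity)]
  simp only [e1, e2]
  have := sum_nat_bound hs
  calc _ ≤ ENNReal.ofReal 1 + ENNReal.ofReal (1 / s) + ENNReal.ofReal (1 / s) := by
        gcongr
        simp
    _ = _ := by
        rw [← ENNReal.ofReal_add (by norm_num) (by positivity),
          ← ENNReal.ofReal_add (by positivity) (by positivity)]
        congr 1; ring

lemma real_bound {P D : ℝ} (hP : 4 / 3 < P) (hD : 0 ≤ D) (n : ℤ) :
    ((2 : ℝ) ^ n) ^ (1 / 2 : ℝ) * ((D * (((2 : ℝ) ^ n) ^ (5 / 2 : ℝ) * ((1 + (2 : ℝ) ^ n) ^ 9)⁻¹)) *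
      (1 + 2 / (((2 : ℝ) ^ n) ^ 2 / 2)) ^ (2 / P)) ≤
      16 * D * ((2 : ℝ) ^ (-(3 - 4 / P))) ^ n.natAbs := by
  set l : ℝ := (2 : ℝ) ^ n with hl
  have hl0 : 0 < l := by positivity
  have hP0 : 0 < P := by linarith
  have h4P : 4 / P ≤ 3 := by rw [div_le_iff₀ hP0]; linarith
  have h2P : 2 / P ≤ 2 := by rw [div_le_iff₀ hP0]; linarith
  set θ : ℝ := 3 - 4 / P with hθ
  have hθ0 : 0 ≤ θ := by linarith
  have hθ3 : θ ≤ 3 := by have : 0 < 4 / P := by positivity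
                         linarith
  have hq : (1 + 2 / (l ^ 2 / 2)) ^ (2 / P) ≤ 16 * (1 + l) ^ 3 * l ^ (-(4 / P)) := by
    calc (1 + 2 / (l ^ 2 / 2)) ^ (2 / P) ≤ (4 * ((1 + l) ^ (2 : ℝ) * l ^ (-2 : ℝ))) ^ (2 / P) := by
          apply Real.rpow_le_rpow (by positivity) _ (by positivity)
          rw [Real.rpow_neg hl0.le, Real.rpow_two, Real.rpow_two]
          field_simp
          nlinarith
      _ = 4 ^ (2 / P) * (1 + l) ^ (4 / P) * l ^ (-(4 / P)) := by
          rw [Real.mul_rpow (by norm_num) (by positivity), Real.mul_rpow (by positivity)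
            (by positivity), ← Real.rpow_mul (by positivity), ← Real.rpow_mul (by positivity)]
          rw [mul_assoc]
          congr 3 <;> ring_nf
      _ ≤ 4 ^ (2 : ℝ) * (1 + l) ^ (3 : ℝ) * l ^ (-(4 / P)) := by
          gcongr
          · norm_num
          · linarith
      _ = _ := by norm_num
  have hfin : l ^ θ * ((1 + l) ^ 6)⁻¹ ≤ ((2 : ℝ) ^ (-θ)) ^ n.natAbs := by
    rw [← Real.rpow_natCast ((2 : ℝ) ^ (-θ)), ← Real.rpow_mul (by norm_num)]
    have e : l ^ θ = 2 ^ ((n : ℝ) * θ) := by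
      rw [hl, ← Real.rpow_intCast, ← Real.rpow_mul (by norm_num)]
    rcases le_total 0 n with hn | hn
    · have hna : ((n.natAbs : ℕ) : ℝ) = n := by
        rw [Nat.cast_natAbs, abs_of_nonneg hn]
      rw [hna]
      have h6 : l ^ (2 * θ) ≤ (1 + l) ^ 6 := by
        calc l ^ (2 * θ) ≤ (1 + l) ^ (2 * θ) := by gcongr; linarith
          _ ≤ (1 + l) ^ (6 : ℝ) := by
            apply Real.rpow_le_rpow_of_exponent_le <;> linarith
          _ = _ := by norm_num
      calc l ^ θ * ((1 + l) ^ 6)⁻¹ ≤ l ^ θ * (l ^ (2 * θ))⁻¹ := by gcongr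
        _ = l ^ (-θ) := by
          rw [← Real.rpow_neg hl0.le, ← Real.rpow_add hl0]; congr 1; ring
        _ = (l ^ θ)⁻¹ := Real.rpow_neg hl0.le _
        _ = 2 ^ (-((n : ℝ) * θ)) := by rw [e, Real.rpow_neg (by norm_num)]
        _ ≤ _ := by apply le_of_eq; congr 1; ring
    · have hna : ((n.natAbs : ℕ) : ℝ) = -n := by
        rw [Nat.cast_natAbs, abs_of_nonpos hn, Int.cast_neg]
      rw [hna]
      calc l ^ θ * ((1 + l) ^ 6)⁻¹ ≤ l ^ θ * 1 := by
            gcongr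
            apply inv_le_one_of_one_le₀
            apply one_le_pow₀
            linarith
        _ = _ := by rw [mul_one, e]; congr 1; ring
  calc l ^ (1 / 2 : ℝ) * ((D * (l ^ (5 / 2 : ℝ) * ((1 + l) ^ 9)⁻¹)) *
      (1 + 2 / (l ^ 2 / 2)) ^ (2 / P))
      ≤ l ^ (1 / 2 : ℝ) * ((D * (l ^ (5 / 2 : ℝ) * ((1 + l) ^ 9)⁻¹)) *
        (16 * (1 + l) ^ 3 * l ^ (-(4 / P)))) := by gcongr
    _ = 16 * D * ((l ^ (1 / 2 : ℝ) * l ^ (5 / 2 : ℝ) * l ^ (-(4 / P))) * ((1 + l) ^ 6)⁻¹) := by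
        field_simp
    _ = 16 * D * (l ^ θ * ((1 + l) ^ 6)⁻¹) := by
        rw [← Real.rpow_add hl0, ← Real.rpow_add hl0]
        congr 4
        norm_num
    _ ≤ _ := by gcongr

lemma inner_bound {p : ℝ≥0∞} {A s : ℝ} (hA : 0 ≤ A) (hs : 0 < s) (hp2 : p ≠ ∞)
    (hP : 1 ≤ p.toReal) (a : ℤ × ℤ → ℝ≥0∞)
    (ha : ∀ m : ℤ × ℤ, a m ≤ ENNReal.ofReal (A * (((1 + s * |(m.1 : ℝ)|) ^ 9)⁻¹ *
      ((1 + s * |(m.2 : ℝ)|) ^ 9)⁻¹))) :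
    lpS p a ≤ ENNReal.ofReal (A * (1 + 2 / s) ^ (2 / p.toReal)) := by
  rw [lpS, if_neg hp2]
  set P := p.toReal with hPd
  have hP0 : 0 < P := by linarith
  set w : ℤ → ℝ≥0∞ := fun j => ENNReal.ofReal (((1 + s * |(j : ℝ)|) ^ 9)⁻¹) ^ P with hw
  have h1 : ∀ m, a m ^ P ≤ ENNReal.ofReal A ^ P * (w m.1 * w m.2) := by
    intro m
    refine (ENNReal.rpow_le_rpow (ha m) hP0.le).trans ?_
    rw [ENNReal.ofReal_mul hA, ENNReal.ofReal_mul (by positivity),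
      ENNReal.mul_rpow_of_nonneg _ _ hP0.le, ENNReal.mul_rpow_of_nonneg _ _ hP0.le]
  have h2 : ∑' m, a m ^ P ≤ ENNReal.ofReal A ^ P *
      (ENNReal.ofReal (1 + 2 / s) * ENNReal.ofReal (1 + 2 / s)) := by
    refine (ENNReal.tsum_le_tsum h1).trans ?_
    rw [ENNReal.tsum_mul_left, ENNReal.tsum_prod (f := fun i j => w i * w j)]
    simp only [ENNReal.tsum_mul_left, ENNReal.tsum_mul_right]
    have := sum_int_bound hs hP
    gcongr
  refine (ENNReal.rpow_le_rpow h2 (by positivity)).trans ?_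
  rw [ENNReal.mul_rpow_of_nonneg _ _ (by positivity), ← ENNReal.rpow_mul,
    mul_one_div_cancel hP0.ne', ENNReal.rpow_one, ← sq, ← ENNReal.rpow_natCast,
    ← ENNReal.rpow_mul, ENNReal.ofReal_rpow_of_nonneg (by positivity) (by positivity),
    ← ENNReal.ofReal_mul hA]
  apply le_of_eq
  congr 3
  push_cast; ring

lemma outer_bound {q : ℝ≥0∞} (hq : 1 ≤ q) {c ρ : ℝ≥0∞} (hc : c ≠ ⊤) (hρ : ρ < 1)
    (b : ℤ → ℝ≥0∞) (hb : ∀ n, b n ≤ c * ρ ^ n.natAbs) : lpS q b ≠ ⊤ := by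
  rw [lpS]
  split_ifs with h
  · refine ne_top_of_le_ne_top hc (iSup_le fun n => (hb n).trans ?_)
    exact mul_le_of_le_one_right' (pow_le_one' hρ.le _)
  set Q := q.toReal
  have hQ : 0 < Q := ENNReal.toReal_pos (by rintro rfl; simp at hq) h
  apply ENNReal.rpow_ne_top_of_nonneg (by positivity)
  have h1 : ∀ n, b n ^ Q ≤ c ^ Q * (ρ ^ Q) ^ n.natAbs := by
    intro n
    refine (ENNReal.rpow_le_rpow (hb n) hQ.le).trans ?_
    rw [ENNReal.mul_rpow_of_nonneg _ _ hQ.le, ← ENNReal.rpow_natCast, ← ENNReal.rpow_natCast,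
      ← ENNReal.rpow_mul, ← ENNReal.rpow_mul, mul_comm Q]
  refine ne_top_of_le_ne_top ?_ (ENNReal.tsum_le_tsum h1)
  rw [ENNReal.tsum_mul_left]
  apply ENNReal.mul_ne_top (ENNReal.rpow_ne_top_of_nonneg hQ.le hc)
  have hr : ρ ^ Q < 1 := ENNReal.rpow_lt_one hρ hQ
  have hg : ∑' n : ℕ, (ρ ^ Q) ^ n ≠ ⊤ := by
    rw [ENNReal.tsum_geometric]
    simpa [tsub_eq_zero_iff_le] using hr
  rw [tsum_of_nat_of_neg_add_one ENNReal.summable ENNReal.summable]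
  apply ENNReal.add_ne_top.2
  refine ⟨by simpa using hg, ?_⟩
  refine ne_top_of_le_ne_top hg (ENNReal.tsum_le_tsum fun n => ?_)
  have : (-((n : ℤ) + 1)).natAbs = n + 1 := by omega
  rw [this]
  exact pow_le_pow_right_of_le_one' hr.le (by omega)

theorem schwartz_mem_lqlp (q p : ℝ≥0∞) (hq : 1 ≤ q) (hp1 : 4 / 3 < p) (hp2 : p ≠ ∞)
    (φ : SchwartzMap R3 ℂ) : lqlpNorm q p φ ≠ ⊤ := by
  have hP : 4 / 3 < p.toReal := by
    have := (ENNReal.toReal_lt_toReal (ne_top_of_lt hp1) hp2).2 hp1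
    simpa using this
  have hP0 : 0 < p.toReal := by linarith
  obtain ⟨D, hD, hproj⟩ := proj_bound φ
  unfold lqlpNorm
  have hρ : ENNReal.ofReal ((2 : ℝ) ^ (-(3 - 4 / p.toReal))) < 1 := by
    rw [ENNReal.ofReal_lt_one]
    apply Real.rpow_lt_one_of_one_lt_of_neg (by norm_num)
    have : 4 / p.toReal < 3 := by rw [div_lt_iff₀ hP0]; linarith
    linarith
  apply outer_bound hq (c := ENNReal.ofReal (16 * D)) ENNReal.ofReal_ne_top hρ
  intro n
  have hl0 : (0 : ℝ) < (2 : ℝ) ^ n := by positivity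
  have h1 := inner_bound (p := p) (A := D * (((2 : ℝ) ^ n) ^ (5 / 2 : ℝ) *
    ((1 + (2 : ℝ) ^ n) ^ 9)⁻¹)) (s := ((2 : ℝ) ^ n) ^ 2 / 2) (by positivity) (by positivity) hp2
    (by linarith) _ (fun m => hproj ((2 : ℝ) ^ n) m hl0)
  have h2 : ((2 : ℝ≥0∞) ^ n) ^ ((1 : ℝ) / 2) = ENNReal.ofReal (((2 : ℝ) ^ n) ^ (1 / 2 : ℝ)) := by
    rw [← ENNReal.ofReal_rpow_of_pos hl0]
    congr 1
    rw [← ENNReal.ofReal_ofNat, ← Real.rpow_intCast, ← ENNReal.ofReal_rpow_of_pos (by norm_num),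
      ENNReal.rpow_intCast]
  rw [h2]
  refine (mul_le_mul_right h1 _).trans ?_
  rw [← ENNReal.ofReal_mul (by positivity), ← ENNReal.ofReal_pow (by positivity),
    ← ENNReal.ofReal_mul (by positivity)]
  exact ENNReal.ofReal_le_ofReal (real_bound hP hD n)
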